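/- arXiv:2502.13865 — 2 statements merged into one kernel-verified Lean document; each statement's English description precedes it below -/
import Mathlib

section
/- For every real C ≥ 1 there exists K ≥ 1 (depending only on C) such that the following holds. Let (X, μ) be a C-coarse median space, let x, y ∈ X, let R ≥ 0, and let a, b ∈ X be points lying in the closed R-neighbourhood N_R([x,y]_μ) of the interval [x,y]_μ. Then the interval [a,b]_μ is contained in the closed neighbourhood N_{K·R+K}([x,y]_μ). -/
open Metric Set

universe u

/-- A `C`-coarse median on a metric space `X`. -/
def IsCoarseMedian {X : Type*} [MetricSpace X] (C : ℝ) (μ : X → X → X → X) : Prop :=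
  (∀ x y z : X, μ x y z = μ y x z) ∧
  (∀ x y z : X, μ x y z = μ x z y) ∧
  (∀ x y : X, μ x x y = x) ∧
  (∀ x y z w : X, dist (μ (μ x w y) w z) (μ x w (μ y w z)) ≤ C) ∧
  (∀ x y z w : X, dist (μ x y z) (μ w y z) ≤ C * dist x w + C)

/-- The coarse median interval `[x,y]_μ = {μ x y z : z ∈ X}`. -/
def cmInterval {X : Type*} [MetricSpace X] (μ : X → X → X → X) (x y : X) : Set X :=
  {w : X | ∃ z : X, μ x y z = w}

/-- The closed `R`-neighbourhood `{x : dist(x, A) ≤ R}` of a set. -/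
def closedNbhd {X : Type*} [MetricSpace X] (R : ℝ) (A : Set X) : Set X :=
  {x : X | Metric.infDist x A ≤ R}

/-- `A` is `D`-quasiconvex with respect to the coarse median `μ`. -/
def IsCMQuasiconvex {X : Type*} [MetricSpace X] (μ : X → X → X → X) (D : ℝ) (A : Set X) :
    Prop :=
  ∀ a₁ ∈ A, ∀ a₂ ∈ A, cmInterval μ a₁ a₂ ⊆ closedNbhd D A

/-- A metric space is geodesic if any two points are joined by an isometrically embedded
compact real interval. -/
def IsGeodesicSpace (X : Type*) [MetricSpace X] : Prop :=
  ∀ x y : X, ∃ γ : ℝ → X, γ 0 = x ∧ γ (dist x y) = y ∧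
    ∀ s ∈ Set.Icc (0 : ℝ) (dist x y), ∀ t ∈ Set.Icc (0 : ℝ) (dist x y),
      dist (γ s) (γ t) = |s - t|

/-- An `(L, A)`-quasigeodesic from `x` to `y`, defined on the interval `[a, b]`. -/
def IsQuasigeodesicOn {X : Type*} [MetricSpace X] (L A a b : ℝ) (γ : ℝ → X) (x y : X) :
    Prop :=
  a ≤ b ∧ γ a = x ∧ γ b = y ∧
    ∀ s ∈ Set.Icc a b, ∀ t ∈ Set.Icc a b,
      |s - t| / L - A ≤ dist (γ s) (γ t) ∧ dist (γ s) (γ t) ≤ L * |s - t| + A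

/-- The Gromov product `⟨y,z⟩_x`. -/
noncomputable def gromovProd {X : Type*} [MetricSpace X] (x y z : X) : ℝ :=
  (dist x y + dist x z - dist y z) / 2

/-- `X` is `δ`-hyperbolic (four-point condition on Gromov products). -/
def IsDeltaHyperbolic (X : Type*) [MetricSpace X] (δ : ℝ) : Prop :=
  ∀ w x y z : X, min (gromovProd w x y) (gromovProd w y z) ≤ gromovProd w x z + δ

/-- `a` lies `r`-coarsely between `p` and `b`. -/
def CoarseBetween {X : Type*} [MetricSpace X] (μ : X → X → X → X) (r : ℝ) (p a b : X) : Prop :=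
  dist (μ p a b) a ≤ r

namespace IsCoarseMedian

variable {X : Type*} [MetricSpace X] {C r : ℝ} {μ : X → X → X → X}

lemma swap_left (h : IsCoarseMedian C μ) (x y z : X) : μ x y z = μ y x z := h.1 x y z

lemma swap_right (h : IsCoarseMedian C μ) (x y z : X) : μ x y z = μ x z y := h.2.1 x y z

lemma self_left (h : IsCoarseMedian C μ) (x y : X) : μ x x y = x := h.2.2.1 x y

lemma self_right (h : IsCoarseMedian C μ) (x y : X) : μ x y y = y := by
  rw [h.swap_left, h.swap_right, h.self_left]

lemma dist_assoc_le (h : IsCoarseMedian C μ) (x y z p : X) :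
    dist (μ (μ x p y) p z) (μ x p (μ y p z)) ≤ C := h.2.2.2.1 x y z p

lemma dist_left_le (h : IsCoarseMedian C μ) (hC : 0 ≤ C) {x w : X} (y z : X)
    (hr : dist x w ≤ r) : dist (μ x y z) (μ w y z) ≤ C * r + C :=
  (h.2.2.2.2 x y z w).trans (by gcongr)

lemma dist_right_le (h : IsCoarseMedian C μ) (hC : 0 ≤ C) {x w : X} (y z : X)
    (hr : dist x w ≤ r) : dist (μ y z x) (μ y z w) ≤ C * r + C := by
  rw [h.swap_right y z x, h.swap_left y x z, h.swap_right y z w, h.swap_left y w z]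
  exact h.dist_left_le hC y z hr

lemma coarseBetween_symm (h : IsCoarseMedian C μ) {p a b : X} (hab : CoarseBetween μ r p a b) :
    CoarseBetween μ r b a p := by
  unfold CoarseBetween at *
  rwa [h.swap_left, h.swap_right, h.swap_left]

lemma coarseBetween_median (h : IsCoarseMedian C μ) (x y z : X) :
    CoarseBetween μ C x (μ x y z) y := by
  have h₁ := h.dist_assoc_le x x z y
  rw [h.swap_right x y x, h.self_left, dist_comm] at h₁
  unfold CoarseBetween
  rwa [h.swap_right]

lemma coarseBetween_trans (h : IsCoarseMedian C μ) (hC : 1 ≤ C) (hr : 0 ≤ r) {p a b c : X}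
    (hab : CoarseBetween μ r p a b) (hbc : CoarseBetween μ r p b c) :
    CoarseBetween μ (3 * C * (r + 1)) p a c := by
  unfold CoarseBetween at *
  rw [h.swap_left] at hab hbc ⊢
  have h₁ := h.dist_left_le (by linarith) p c hab
  have h₂ := h.dist_assoc_le a b c p
  have h₃ := h.dist_right_le (by linarith) a p hbc
  rw [dist_comm] at h₁
  have h₄ := dist_triangle4 (μ a p c) (μ (μ a p b) p c) (μ a p (μ b p c)) (μ a p b)
  have h₅ := dist_triangle (μ a p c) (μ a p b) a
  nlinarith

lemma coarseBetween_of_coarseBetween (h : IsCoarseMedian C μ) (hC : 1 ≤ C) (hr : 0 ≤ r)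
    {p a b c : X} (hab : CoarseBetween μ r p a b) (hbc : CoarseBetween μ r p b c) :
    CoarseBetween μ (3 * C * (r + 1)) a b c := by
  unfold CoarseBetween at *
  have h₁ := h.dist_left_le (by linarith) b c hab
  have h₂ := h.dist_assoc_le a p c b
  have h₃ := h.dist_right_le (by linarith) a b hbc
  rw [h.swap_left p a b, h.swap_right a p b, dist_comm] at h₁
  rw [h.self_right] at h₃
  have h₄ := dist_triangle4 (μ a b c) (μ (μ a b p) b c) (μ a b (μ p b c)) b
  nlinarith

lemma coarseBetween_median_right (h : IsCoarseMedian C μ) (hC : 1 ≤ C) (hr : 0 ≤ r)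
    {p u a b : X} (ha : CoarseBetween μ r p u a) (hb : CoarseBetween μ r p u b) :
    CoarseBetween μ (3 * C * (r + 1)) p u (μ p a b) := by
  unfold CoarseBetween at *
  rw [h.swap_left] at ha hb
  rw [h.swap_left, h.swap_left p a b]
  have h₁ := h.dist_assoc_le u a b p
  have h₂ := h.dist_left_le (by linarith) p b ha
  rw [dist_comm] at h₁
  have h₃ := dist_triangle4 (μ u p (μ a p b)) (μ (μ u p a) p b) (μ u p b) u
  nlinarith

/-- Points of `[a, b]_μ` with `a, b` coarsely between `x` and `y` are coarsely fixed by the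
projection to `[x, y]_μ`. -/
lemma exists_dist_median_le (hC : 1 ≤ C) :
    ∃ D : ℝ, 0 ≤ D ∧ ∀ (X : Type u) [MetricSpace X] (μ : X → X → X → X),
      IsCoarseMedian C μ → ∀ x y a b m : X, CoarseBetween μ C x a y → CoarseBetween μ C x b y →
        CoarseBetween μ C a m b → dist m (μ x y m) ≤ D := by
  let g : ℝ → ℝ := fun r ↦ 3 * C * (r + 1)
  have hg : ∀ r, 0 ≤ r → r ≤ g r := fun r hr ↦ by simp only [g]; nlinarith
  have h₀ : 0 ≤ C := by linarith
  have le₁ := hg _ h₀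
  have h₁ := h₀.trans le₁
  have le₂ := hg _ h₁
  have h₂ := h₁.trans le₂
  have le₃ := hg _ h₂
  have h₃ := h₂.trans le₃
  have le₄ := hg _ h₃
  have h₄ := h₃.trans le₄
  refine ⟨g (g (g (g C))) + g (g (g C)), by positivity, fun X _ μ h x y a b m ha hb hm ↦ ?_⟩
  have mono : ∀ {r s : ℝ} {p q t : X}, r ≤ s → CoarseBetween μ r p q t →
      CoarseBetween μ s p q t := fun hrs hr ↦ le_trans hr hrs
  -- In the coarse semilattice order based at `x`, put `u = m ∧ a`, `v = m ∧ b`, `n = m ∧ y`.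
  have below : ∀ c : X, CoarseBetween μ C x (μ x m c) m ∧ CoarseBetween μ C x (μ x m c) c ∧
      CoarseBetween μ C m (μ x m c) c := fun c ↦ by
    refine ⟨h.coarseBetween_median x m c, ?_, ?_⟩
    · rw [h.swap_right x m c]
      exact h.coarseBetween_median x c m
    · rw [h.swap_left x m c, h.swap_right m x c]
      exact h.coarseBetween_median m c x
  obtain ⟨hum, hua, hmua⟩ := below a
  obtain ⟨hvm, hvb, hmvb⟩ := below b
  obtain ⟨hnm, -, -⟩ := below y
  set u := μ x m a
  set v := μ x m b
  have huy : CoarseBetween μ (g C) x u y := h.coarseBetween_trans hC h₀ hua ha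
  have hvy : CoarseBetween μ (g C) x v y := h.coarseBetween_trans hC h₀ hvb hb
  have humb : CoarseBetween μ (g C) u m b :=
    h.coarseBetween_of_coarseBetween hC h₀ (h.coarseBetween_symm hmua) hm
  have hvmu : CoarseBetween μ (g (g C)) v m u :=
    h.coarseBetween_of_coarseBetween hC h₁ (mono le₁ (h.coarseBetween_symm hmvb))
      (h.coarseBetween_symm humb)
  have hun : CoarseBetween μ (g (g C)) x u (μ x m y) :=
    h.coarseBetween_median_right hC h₁ (mono le₁ hum) huy
  have hvn : CoarseBetween μ (g (g C)) x v (μ x m y) :=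
    h.coarseBetween_median_right hC h₁ (mono le₁ hvm) hvy
  set n := μ x m y
  have hnm' := mono (le₁.trans le₂) hnm
  have hunm : CoarseBetween μ (g (g (g C))) u n m :=
    h.coarseBetween_of_coarseBetween hC h₂ hun hnm'
  have hvnm : CoarseBetween μ (g (g (g C))) v n m :=
    h.coarseBetween_of_coarseBetween hC h₂ hvn hnm'
  have hnmv : CoarseBetween μ (g (g (g (g C)))) n m v :=
    h.coarseBetween_of_coarseBetween hC h₃ hunm (mono le₃ (h.coarseBetween_symm hvmu))
  unfold CoarseBetween at hnmv hvnm
  rw [h.swap_left v n m, h.swap_right n v m] at hvnm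
  rw [h.swap_right x y m]
  rw [dist_comm] at hnmv
  exact (dist_triangle m (μ n m v) n).trans (add_le_add hnmv hvnm)

end IsCoarseMedian

lemma exists_mem_cmInterval_dist_le {X : Type*} [MetricSpace X] {μ : X → X → X → X} {R : ℝ}
    {x y a : X} (ha : a ∈ closedNbhd R (cmInterval μ x y)) :
    ∃ a' ∈ cmInterval μ x y, dist a a' ≤ R + 1 := by
  obtain ⟨a', ha', hd⟩ := (Metric.infDist_lt_iff (s := cmInterval μ x y) ⟨_, x, rfl⟩).1
    (lt_of_le_of_lt ha (lt_add_one R))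
  exact ⟨a', ha', hd.le⟩

/-- Lemma 2.2(4): intervals with endpoints near an interval stay uniformly close to it. -/
theorem interval_nearby_interval_subset_nbhd :
    ∀ C : ℝ, 1 ≤ C → ∃ K : ℝ, 1 ≤ K ∧
      ∀ (X : Type u) [MetricSpace X], ∀ μ : X → X → X → X, IsCoarseMedian C μ →
        ∀ (x y : X) (R : ℝ), 0 ≤ R → ∀ a b : X,
          a ∈ closedNbhd R (cmInterval μ x y) → b ∈ closedNbhd R (cmInterval μ x y) →
            cmInterval μ a b ⊆ closedNbhd (K * R + K) (cmInterval μ x y) := by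
  intro C hC
  obtain ⟨D, hD, hproj⟩ := IsCoarseMedian.exists_dist_median_le.{u} hC
  refine ⟨4 * C + D, by linarith, ?_⟩
  rintro X _ μ h x y R hR a b ha hb _ ⟨z, rfl⟩
  obtain ⟨_, ⟨s, rfl⟩, has⟩ := exists_mem_cmInterval_dist_le ha
  obtain ⟨_, ⟨t, rfl⟩, hbt⟩ := exists_mem_cmInterval_dist_le hb
  set a' := μ x y s
  set b' := μ x y t
  have h₁ := h.dist_left_le (by linarith) b z has
  have h₂ := h.dist_left_le (by linarith) a' z hbt
  rw [h.swap_left b, h.swap_left b'] at h₂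
  have h₃ := hproj X μ h x y a' b' (μ a' b' z) (h.coarseBetween_median x y s)
    (h.coarseBetween_median x y t) (h.coarseBetween_median a' b' z)
  have hmem : μ x y (μ a' b' z) ∈ cmInterval μ x y := ⟨μ a' b' z, rfl⟩
  refine (Metric.infDist_le_dist_of_mem hmem).trans ?_
  have h₄ := dist_triangle4 (μ a b z) (μ a' b z) (μ a' b' z) (μ x y (μ a' b' z))
  nlinarith [mul_nonneg hD hR, mul_nonneg (zero_le_one.trans hC) hR]
end

section
/- For all reals δ ≥ 0 and C ≥ 1 there exists D ≥ 0 (depending only on δ and C) such that the following holds. Let X be a geodesic δ-hyperbolic metric space, and let μ and ν be two C-coarse medians on X. Then dist(μ(x,y,z), ν(x,y,z)) ≤ D for all x, y, z ∈ X. In particular, every geodesic hyperbolic metric space has a unique coarse median structure. -/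
open Metric Set

universe u

/-- The four-point condition iterated along a chain of `2 ^ k` steps. -/
lemma IsDeltaHyperbolic.chain {X : Type*} [MetricSpace X] {δ : ℝ} (hX : IsDeltaHyperbolic X δ)
    (q : X) (m : ℝ) (k : ℕ) (f : ℕ → X)
    (hf : ∀ i < 2 ^ k, m ≤ gromovProd q (f i) (f (i + 1))) :
    m - k * δ ≤ gromovProd q (f 0) (f (2 ^ k)) := by
  induction k generalizing f with
  | zero => simpa using hf 0
  | succ k ih =>
    have hpow : 2 ^ (k + 1) = 2 ^ k + 2 ^ k := by ring
    have hleft := ih f fun i hi => hf i (by omega)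
    have hright := ih (fun i => f (2 ^ k + i)) fun i hi => by
      simpa [add_assoc] using hf (2 ^ k + i) (by omega)
    simp only [add_zero] at hright
    have h4 := hX q (f 0) (f (2 ^ k)) (f (2 ^ k + 2 ^ k))
    have hmin := (le_min hleft hright).trans h4
    rw [hpow]
    push_cast
    linarith

lemma IsDeltaHyperbolic.le_gromovProd_trans {X : Type*} [MetricSpace X] {δ : ℝ}
    (hX : IsDeltaHyperbolic X δ) {q x y z : X} {a b : ℝ} (hab : b ≤ a)
    (hxy : a ≤ gromovProd q x y) (hyz : b ≤ gromovProd q y z) :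
    b - δ ≤ gromovProd q x z := by
  have := (le_min (hab.trans hxy) hyz).trans (hX q x y z)
  linarith

lemma gromovProd_comm {X : Type*} [MetricSpace X] (q x y : X) :
    gromovProd q x y = gromovProd q y x := by
  rw [gromovProd, gromovProd, dist_comm x y]
  ring

/-- A point between `x` and `y` is close to the geodesic point between `x` and `z` at the same
distance from `x`, as long as that distance is at most the Gromov product of `y` and `z`. -/
lemma IsDeltaHyperbolic.dist_le_of_fellow {X : Type*} [MetricSpace X] {δ t : ℝ} (hδ : 0 ≤ δ)
    (hX : IsDeltaHyperbolic X δ) {x y z q r : X} (ht : t ≤ gromovProd x y z)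
    (hxq : dist x q = t) (hqy : dist q y = dist x y - t)
    (hxr : dist x r = t) (hrz : dist r z = dist x z - t) :
    dist q r ≤ 4 * δ := by
  have hq : t ≤ gromovProd x q y := by unfold gromovProd; linarith
  have hr : t ≤ gromovProd x z r := by
    rw [gromovProd_comm]; unfold gromovProd; linarith
  have hqz := hX.le_gromovProd_trans le_rfl hq ht
  have hqr := hX.le_gromovProd_trans (a := t - δ) (b := t - δ) le_rfl hqz (by linarith)
  unfold gromovProd at hqr
  linarith

lemma dist_geodesic_endpoints {X : Type*} [MetricSpace X] {x y : X} {γ : ℝ → X} (h0 : γ 0 = x)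
    (h1 : γ (dist x y) = y)
    (hγ : ∀ s ∈ Icc 0 (dist x y), ∀ t ∈ Icc 0 (dist x y), dist (γ s) (γ t) = |s - t|)
    {t : ℝ} (ht : t ∈ Icc 0 (dist x y)) :
    dist x (γ t) = t ∧ dist (γ t) y = dist x y - t := by
  constructor
  · have h := hγ 0 (left_mem_Icc.2 dist_nonneg) t ht
    rwa [h0, zero_sub, abs_neg, abs_of_nonneg ht.1] at h
  · have h := hγ t ht _ (right_mem_Icc.2 dist_nonneg)
    rw [h1, abs_sub_comm, abs_of_nonneg (by linarith [ht.2])] at h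
    exact h

lemma IsGeodesicSpace.exists_point {X : Type*} [MetricSpace X] (hX : IsGeodesicSpace X)
    (x y : X) {t : ℝ} (ht : t ∈ Icc 0 (dist x y)) :
    ∃ r, dist x r = t ∧ dist r y = dist x y - t := by
  obtain ⟨γ, h0, h1, hγ⟩ := hX x y
  exact ⟨γ t, dist_geodesic_endpoints h0 h1 hγ ht⟩

/-- A linear function dominates `2 ^ n` only on a bounded range. -/
lemma natCast_le_of_two_pow_le {a b : ℝ} (ha : 0 ≤ a) (hb : 0 ≤ b) {n : ℕ}
    (hn : (2 : ℝ) ^ n ≤ a + b * n) : (n : ℝ) ≤ 4 * (a + b) := by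
  rcases Nat.eq_zero_or_pos n with rfl | hpos
  · simp only [Nat.cast_zero]; positivity
  have hsq : ∀ k : ℕ, k ^ 2 ≤ 4 * 2 ^ k := by
    intro k
    have hlin : ∀ k : ℕ, 2 * k + 1 ≤ 4 * 2 ^ k := by
      intro k
      induction k with
      | zero => simp
      | succ k ih => rw [pow_succ]; omega
    induction k with
    | zero => simp
    | succ k ih =>
      have := hlin k
      rw [pow_succ 2 k]
      nlinarith
  have h1 : (n : ℝ) ^ 2 ≤ 4 * 2 ^ n := by exact_mod_cast hsq n
  have h2 : (1 : ℝ) ≤ n := by exact_mod_cast hpos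
  by_contra! hlt
  nlinarith

/-- A point of `A`, or a point at distance `2 * D` from `q`, has a near point of `A` with large
Gromov product based at `q`. -/
lemma exists_mem_le_gromovProd {X : Type*} [MetricSpace X] {A : Set X} {D : ℝ} (hD : 0 ≤ D)
    {q p : X} (hq : ∀ a ∈ A, D ≤ dist q a) (hp : infDist p A ≤ D) (hA : A.Nonempty)
    (h : p ∈ A ∨ dist q p = 2 * D) :
    ∃ a ∈ A, dist p a ≤ D + 1 ∧ D - 1 ≤ gromovProd q p a := by
  rcases h with h | h
  · refine ⟨p, h, by rw [dist_self]; linarith, ?_⟩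
    have := hq p h
    rw [gromovProd, dist_self]
    linarith
  · obtain ⟨a, ha, hpa⟩ := (infDist_lt_iff hA).1 (lt_of_le_of_lt hp (lt_add_one D))
    refine ⟨a, ha, hpa.le, ?_⟩
    have := hq a ha
    unfold gromovProd
    linarith

/-- The projection of a geodesic by a coarse Lipschitz map joins two points of its coarse image
by a chain, which gives a logarithmic lower bound for the Gromov product. -/
lemma le_gromovProd_of_coarse_retraction {X : Type*} [MetricSpace X] {δ C D : ℝ} (hC : 0 ≤ C)
    (hδ : 0 ≤ δ) (hG : IsGeodesicSpace X) (hX : IsDeltaHyperbolic X δ) {A : Set X} {f : X → X}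
    (hfA : ∀ z, f z ∈ A) (hret : ∀ a ∈ A, dist a (f a) ≤ C)
    (hlip : ∀ z w, dist (f z) (f w) ≤ C * dist z w + C) {q a b : X}
    (hq : ∀ a ∈ A, D ≤ dist q a) (ha : a ∈ A) (hb : b ∈ A) {k : ℕ} (hk : dist a b ≤ 2 ^ k) :
    D - C - (k + 2) * δ ≤ gromovProd q a b := by
  obtain ⟨η, h0, h1, hη⟩ := hG a b
  have hpos : (0 : ℝ) < 2 ^ k := by positivity
  have hmem : ∀ i : ℕ, i ≤ 2 ^ k → (i : ℝ) * (dist a b / 2 ^ k) ∈ Icc 0 (dist a b) := by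
    intro i hi
    have hi' : (i : ℝ) ≤ 2 ^ k := by exact_mod_cast hi
    refine ⟨by positivity, ?_⟩
    calc (i : ℝ) * (dist a b / 2 ^ k) ≤ 2 ^ k * (dist a b / 2 ^ k) := by gcongr
      _ = dist a b := by field_simp
  have hchain := hX.chain q (D - C) k (fun i => f (η (i * (dist a b / 2 ^ k)))) fun i hi => by
    have hstep := hη _ (hmem i hi.le) _ (hmem (i + 1) hi)
    have hle : dist (η (i * (dist a b / 2 ^ k))) (η ((i + 1 : ℕ) * (dist a b / 2 ^ k))) ≤ 1 := by
      rw [hstep, abs_sub_comm]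
      push_cast
      rw [← sub_mul, add_sub_cancel_left, one_mul, abs_of_nonneg (by positivity)]
      exact (div_le_one hpos).2 hk
    have hl := hlip (η (i * (dist a b / 2 ^ k))) (η ((i + 1 : ℕ) * (dist a b / 2 ^ k)))
    have hl' := mul_le_mul_of_nonneg_left hle hC
    have hq1 := hq _ (hfA (η (i * (dist a b / 2 ^ k))))
    have hq2 := hq _ (hfA (η ((i + 1 : ℕ) * (dist a b / 2 ^ k))))
    unfold gromovProd
    linarith
  have hend : ((2 ^ k : ℕ) : ℝ) * (dist a b / 2 ^ k) = dist a b := by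
    push_cast; field_simp
  simp only [hend, Nat.cast_zero, zero_mul, h0, h1] at hchain
  have hnear : ∀ c ∈ A, D - C ≤ gromovProd q c (f c) := by
    intro c hc
    have h1 := hq c hc
    have h2 := hq _ (hfA c)
    have h3 := hret c hc
    unfold gromovProd
    linarith
  have hkδ : 0 ≤ k * δ := by positivity
  have hleft := hX.le_gromovProd_trans (by linarith) (hnear a ha) hchain
  rw [gromovProd_comm] at hleft ⊢
  have hright := hX.le_gromovProd_trans (by linarith) (hnear b hb) hleft
  linarith

/-- Coarse Lipschitz retracts of geodesic hyperbolic spaces are quasiconvex. -/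
lemma infDist_le_of_coarse_retraction {X : Type*} [MetricSpace X] {δ C : ℝ} (hC : 1 ≤ C)
    (hδ : 0 ≤ δ) (hG : IsGeodesicSpace X) (hX : IsDeltaHyperbolic X δ) {A : Set X} {f : X → X}
    (hfA : ∀ z, f z ∈ A) (hret : ∀ a ∈ A, dist a (f a) ≤ C)
    (hlip : ∀ z w, dist (f z) (f w) ≤ C * dist z w + C) {x y q : X} (hx : x ∈ A) (hy : y ∈ A)
    {γ : ℝ → X} (h0 : γ 0 = x) (h1 : γ (dist x y) = y)
    (hγ : ∀ s ∈ Icc 0 (dist x y), ∀ t ∈ Icc 0 (dist x y), dist (γ s) (γ t) = |s - t|)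
    (hq : q ∈ γ '' Icc 0 (dist x y)) :
    infDist q A ≤ C + (4 * (6 * C + 36 * δ + 2) + 5) * δ := by
  have hA : A.Nonempty := ⟨x, hx⟩
  have hcont : ContinuousOn (fun t => infDist (γ t) A) (Icc 0 (dist x y)) := by
    refine (continuous_infDist_pt A).comp_continuousOn ?_
    refine LipschitzOnWith.continuousOn (K := 1) (LipschitzOnWith.of_dist_le_mul ?_)
    intro s hs t ht
    rw [hγ s hs t ht, Real.dist_eq]
    simp
  obtain ⟨t, ht, hmax⟩ := isCompact_Icc.exists_isMaxOn (nonempty_Icc.2 dist_nonneg) hcont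
  set D := infDist (γ t) A
  have hbound : ∀ s ∈ Icc 0 (dist x y), infDist (γ s) A ≤ D := fun s hs => hmax hs
  suffices hD : D ≤ C + (4 * (6 * C + 36 * δ + 2) + 5) * δ by
    obtain ⟨s, hs, rfl⟩ := hq
    exact (hbound s hs).trans hD
  have hD0 : 0 ≤ D := infDist_nonneg
  have hfar : ∀ a ∈ A, D ≤ dist (γ t) a := fun a ha => infDist_le_dist_of_mem ha
  obtain ⟨s, hs, hst, hst2, hsA⟩ : ∃ s ∈ Icc 0 (dist x y), s ≤ t ∧ t - s ≤ 2 * D ∧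
      (γ s ∈ A ∨ dist (γ t) (γ s) = 2 * D) := by
    rcases le_total t (2 * D) with h | h
    · exact ⟨0, left_mem_Icc.2 dist_nonneg, ht.1, by linarith, .inl (h0 ▸ hx)⟩
    · have hm : t - 2 * D ∈ Icc 0 (dist x y) := ⟨by linarith, by linarith [ht.2]⟩
      refine ⟨t - 2 * D, hm, by linarith, by linarith, .inr ?_⟩
      rw [hγ t ht _ hm, sub_sub_cancel, abs_of_nonneg (by positivity)]
  obtain ⟨u, hu, htu, htu2, huA⟩ : ∃ u ∈ Icc 0 (dist x y), t ≤ u ∧ u - t ≤ 2 * D ∧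
      (γ u ∈ A ∨ dist (γ t) (γ u) = 2 * D) := by
    rcases le_total (dist x y) (t + 2 * D) with h | h
    · exact ⟨dist x y, right_mem_Icc.2 dist_nonneg, ht.2, by linarith, .inl (h1.symm ▸ hy)⟩
    · have hm : t + 2 * D ∈ Icc 0 (dist x y) := ⟨by linarith [ht.1], h⟩
      refine ⟨t + 2 * D, hm, by linarith, by linarith, .inr ?_⟩
      rw [hγ t ht _ hm, abs_sub_comm, add_sub_cancel_left, abs_of_nonneg (by positivity)]
  obtain ⟨a, ha, hsa, hga⟩ := exists_mem_le_gromovProd hD0 hfar (hbound s hs) hA hsA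
  obtain ⟨b, hb, hub, hgb⟩ := exists_mem_le_gromovProd hD0 hfar (hbound u hu) hA huA
  have hsu : dist (γ s) (γ u) = u - s := by
    rw [hγ s hs u hu, abs_sub_comm, abs_of_nonneg (by linarith)]
  have hab : dist a b ≤ 6 * D + 2 := by
    have := dist_triangle4 a (γ s) (γ u) b
    rw [dist_comm a (γ s)] at this
    linarith
  obtain ⟨n, hn, hn'⟩ := exists_nat_pow_near (x := 6 * D + 2) (y := (2 : ℝ)) (by linarith)
    one_lt_two
  have hgab := le_gromovProd_of_coarse_retraction (by linarith) hδ hG hX hfA hret hlip hfar ha hb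
    (hab.trans hn'.le)
  push_cast at hgab
  have hnδ : 0 ≤ n * δ := by positivity
  have hsb := hX.le_gromovProd_trans (by linarith) hga hgab
  rw [gromovProd_comm] at hsb
  have hus := hX.le_gromovProd_trans (by linarith) hgb hsb
  have hzero : gromovProd (γ t) (γ u) (γ s) = 0 := by
    rw [gromovProd, hγ t ht u hu, hγ t ht s hs, dist_comm, hsu, abs_sub_comm t u,
      abs_of_nonneg (by linarith), abs_of_nonneg (by linarith)]
    ring
  have hDn : D ≤ C + (n + 5) * δ := by linarith
  have hnle := natCast_le_of_two_pow_le (a := 6 * C + 30 * δ + 2) (b := 6 * δ) (n := n)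
    (by positivity) (by positivity) (by linarith)
  refine hDn.trans ?_
  gcongr
  linarith

namespace IsCoarseMedian

variable {X : Type*} [MetricSpace X] {C : ℝ} {μ : X → X → X → X}

lemma mono {C' : ℝ} (h : IsCoarseMedian C μ) (hC : C ≤ C') : IsCoarseMedian C' μ := by
  obtain ⟨h1, h2, h3, h4, h5⟩ := h
  refine ⟨h1, h2, h3, fun x y z w => (h4 x y z w).trans hC, fun x y z w => (h5 x y z w).trans ?_⟩
  gcongr

lemma dist_third (h : IsCoarseMedian C μ) (x y z w : X) :
    dist (μ x y z) (μ x y w) ≤ C * dist z w + C := by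
  obtain ⟨h1, h2, -, -, h5⟩ := h
  rw [h2 x y z, h1 x z y, h2 x y w, h1 x w y]
  exact h5 z x y w

lemma dist_retraction (h : IsCoarseMedian C μ) (x y z : X) :
    dist (μ x y z) (μ x y (μ x y z)) ≤ C := by
  obtain ⟨h1, h2, h3, h4, -⟩ := h
  have := h4 x x z y
  rwa [h2 x y x, h3] at this

/-- A point close to the interval between `x` and `y` is almost fixed by projection to it. -/
lemma dist_median_le_of_infDist (h : IsCoarseMedian C μ) (hC : 0 ≤ C) {x y q : X} {E : ℝ}
    (hq : infDist q (cmInterval μ x y) < E) : dist q (μ x y q) ≤ C * E + 2 * C + E := by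
  obtain ⟨_, ⟨z, rfl⟩, hz⟩ := (infDist_lt_iff (s := cmInterval μ x y) ⟨_, x, rfl⟩).1 hq
  have h1 := h.dist_retraction x y z
  have h2 := h.dist_third x y (μ x y z) q
  have h3 : C * dist (μ x y z) q ≤ C * E := by
    rw [dist_comm]
    gcongr
  have := dist_triangle4 q (μ x y z) (μ x y (μ x y z)) (μ x y q)
  linarith

/-- A point almost fixed by two projections from `x` almost lies between `x` and the median. -/
lemma dist_median_median_le (h : IsCoarseMedian C μ) (hC : 0 ≤ C) {x y z q : X} {F : ℝ}
    (hxy : dist q (μ x y q) ≤ F) (hxz : dist q (μ x z q) ≤ F) :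
    dist q (μ q x (μ x y z)) ≤ C * F + 2 * C + F := by
  obtain ⟨h1, h2, -, h4, h5⟩ := h
  have ha := h4 q y z x
  have hb := h5 q x z (μ q x y)
  rw [← h1 x y z] at ha
  have e1 : μ q x y = μ x y q := by rw [h1, h2]
  have e2 : μ q x z = μ x z q := by rw [h1, h2]
  rw [e1] at ha hb
  rw [e2] at hb
  have hF : C * dist q (μ x y q) ≤ C * F := by gcongr
  have := dist_triangle4 q (μ x z q) (μ (μ x y q) x z) (μ q x (μ x y z))
  linarith

/-- A point almost fixed by the projections to the three intervals is close to the median. -/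
lemma dist_le_of_almost_between (h : IsCoarseMedian C μ) (hC : 0 ≤ C) {x y z q : X} {F : ℝ}
    (hxy : dist q (μ x y q) ≤ F) (hxz : dist q (μ x z q) ≤ F) (hyz : dist q (μ y z q) ≤ F) :
    dist q (μ x y z) ≤
      C * (C * F + 2 * C + F) + (C * F + 2 * C + F) + C * C + 3 * C := by
  have hx := h.dist_median_median_le hC hxy hxz
  have hy := h.dist_median_median_le hC (x := y) (y := x) (z := z)
    (by rwa [← h.1 x y q]) hyz
  have hm := h.dist_retraction x y z
  rw [← h.1 x y z] at hy
  have hthird := h.dist_third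
  obtain ⟨h1, h2, h3, h4, h5⟩ := h
  set m := μ x y z
  have ha := h4 q x y m
  have hb := h5 q m y (μ q m x)
  have hc := hthird q m (μ x m y) m
  rw [h2 x m y, h1 q m m, h2 m q m, h3 m q] at hc
  rw [h2 x m y, h2 q m x] at ha
  rw [h2 q m x, h2 q m y] at hb
  rw [dist_comm] at hm
  have hX : C * dist q (μ q x m) ≤ C * (C * F + 2 * C + F) := by gcongr
  have hM : C * dist (μ x y m) m ≤ C * C := by gcongr
  have t1 := dist_triangle4 q (μ q y m) (μ (μ q x m) m y) (μ q m (μ x y m))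
  have t2 := dist_triangle q (μ q m (μ x y m)) m
  linarith

/-- Geodesics are uniformly close to median intervals. -/
lemma infDist_cmInterval_le {δ : ℝ} (h : IsCoarseMedian C μ) (hC : 1 ≤ C) (hδ : 0 ≤ δ)
    (hG : IsGeodesicSpace X) (hX : IsDeltaHyperbolic X δ) {x y : X} {t : ℝ}
    (ht : t ∈ Icc 0 (dist x y)) :
    ∃ r, dist x r = t ∧ dist r y = dist x y - t ∧
      infDist r (cmInterval μ x y) ≤ C + (4 * (6 * C + 36 * δ + 2) + 5) * δ := by
  obtain ⟨γ, h0, h1, hγ⟩ := hG x y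
  obtain ⟨hxt, hty⟩ := dist_geodesic_endpoints h0 h1 hγ ht
  refine ⟨γ t, hxt, hty, ?_⟩
  refine infDist_le_of_coarse_retraction hC hδ hG hX
    (A := cmInterval μ x y) (f := μ x y) (fun z => ⟨z, rfl⟩) ?_
    (h.dist_third x y) ⟨x, ?_⟩ ⟨y, ?_⟩ h0 h1 hγ (mem_image_of_mem γ ht)
  · rintro _ ⟨z, rfl⟩
    exact h.dist_retraction x y z
  · rw [h.2.1, h.2.2.1]
  · rw [h.1, h.2.1, h.2.2.1]

/-- A fellow-travelling point of a geodesic is almost fixed by projection to the median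
interval. -/
lemma dist_median_le_of_fellow {δ : ℝ} (h : IsCoarseMedian C μ) (hC : 1 ≤ C) (hδ : 0 ≤ δ)
    (hG : IsGeodesicSpace X) (hX : IsDeltaHyperbolic X δ) {x y z q : X} {t E : ℝ} (ht0 : 0 ≤ t)
    (hE : E = C + (4 * (6 * C + 36 * δ + 2) + 5) * δ + 4 * δ + 1)
    (htz : t ≤ dist x z) (ht : t ≤ gromovProd x y z)
    (hxq : dist x q = t) (hqy : dist q y = dist x y - t) :
    dist q (μ x z q) ≤ C * E + 2 * C + E := by
  obtain ⟨r, hxr, hrz, hr⟩ := h.infDist_cmInterval_le hC hδ hG hX ⟨ht0, htz⟩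
  have hqr := hX.dist_le_of_fellow hδ ht hxq hqy hxr hrz
  refine h.dist_median_le_of_infDist (by linarith) ?_
  have := infDist_le_infDist_add_dist (s := cmInterval μ x z) (x := q) (y := r)
  linarith

end IsCoarseMedian

/-- Every triple has a centre, independent of the coarse median, which is uniformly close to
its median for every coarse median. -/
lemma IsDeltaHyperbolic.exists_center (δ C : ℝ) (hδ : 0 ≤ δ) (hC : 1 ≤ C) :
    ∃ K : ℝ, 0 ≤ K ∧ ∀ (X : Type u) [MetricSpace X], IsGeodesicSpace X → IsDeltaHyperbolic X δ →
      ∀ x y z : X, ∃ q : X, ∀ μ : X → X → X → X, IsCoarseMedian C μ → dist q (μ x y z) ≤ K := by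
  obtain ⟨E, hE⟩ : ∃ E, E = C + (4 * (6 * C + 36 * δ + 2) + 5) * δ + 4 * δ + 1 := ⟨_, rfl⟩
  have hE0 : 0 ≤ E := by rw [hE]; positivity
  obtain ⟨F, hF⟩ : ∃ F, F = C * E + 2 * C + E := ⟨_, rfl⟩
  have hF0 : 0 ≤ F := by rw [hF]; positivity
  refine ⟨C * (C * F + 2 * C + F) + (C * F + 2 * C + F) + C * C + 3 * C, by positivity, ?_⟩
  intro X _ hG hX x y z
  have hxyz := dist_triangle x y z
  have hxzy := dist_triangle x z y
  have hyxz := dist_triangle y x z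
  rw [dist_comm z y] at hxzy
  rw [dist_comm y x] at hyxz
  obtain ⟨t, ht⟩ : ∃ t, t = gromovProd x y z := ⟨_, rfl⟩
  have ht' := ht
  unfold gromovProd at ht'
  obtain ⟨q, hxq, hqy⟩ := hG.exists_point x y (t := t) ⟨by linarith, by linarith⟩
  refine ⟨q, fun μ hμ => hμ.dist_le_of_almost_between (by linarith) ?_ ?_ ?_⟩
  · rw [hF]
    refine hμ.dist_median_le_of_fellow hC hδ hG hX (y := y) (by linarith) hE
      (by linarith) ?_ hxq hqy
    rw [gromovProd, dist_self]
    linarith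
  · rw [hF]
    exact hμ.dist_median_le_of_fellow hC hδ hG hX (by linarith) hE (by linarith) ht.le hxq hqy
  · rw [hF]
    refine hμ.dist_median_le_of_fellow hC hδ hG hX (y := x) (t := dist x y - t) (by linarith) hE
      (by linarith) ?_ (by rw [dist_comm, hqy]) (by rw [dist_comm, hxq, dist_comm y x]; ring)
    rw [gromovProd, dist_comm y x]
    linarith

/-- Corollary 3.2: any two `C`-coarse medians on a geodesic `δ`-hyperbolic space are
`D(δ, C)`-close; in particular, every geodesic hyperbolic space has a unique coarse median
structure. -/
theorem hyperbolic_unique_coarse_median :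
    (∀ δ C : ℝ, 0 ≤ δ → 1 ≤ C → ∃ D : ℝ, 0 ≤ D ∧
      ∀ (X : Type u) [MetricSpace X], IsGeodesicSpace X → IsDeltaHyperbolic X δ →
        ∀ μ ν : X → X → X → X, IsCoarseMedian C μ → IsCoarseMedian C ν →
          ∀ x y z : X, dist (μ x y z) (ν x y z) ≤ D) ∧
    (∀ (X : Type u) [MetricSpace X], IsGeodesicSpace X →
      (∃ δ : ℝ, 0 ≤ δ ∧ IsDeltaHyperbolic X δ) →
        ∀ (C C' : ℝ) (μ ν : X → X → X → X), 1 ≤ C → 1 ≤ C' →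
          IsCoarseMedian C μ → IsCoarseMedian C' ν →
            ∃ D : ℝ, ∀ x y z : X, dist (μ x y z) (ν x y z) ≤ D) := by
  have hclose : ∀ δ C : ℝ, 0 ≤ δ → 1 ≤ C → ∃ D : ℝ, 0 ≤ D ∧
      ∀ (X : Type u) [MetricSpace X], IsGeodesicSpace X → IsDeltaHyperbolic X δ →
        ∀ μ ν : X → X → X → X, IsCoarseMedian C μ → IsCoarseMedian C ν →
          ∀ x y z : X, dist (μ x y z) (ν x y z) ≤ D := by
    intro δ C hδ hC
    obtain ⟨K, hK, hcenter⟩ := IsDeltaHyperbolic.exists_center.{u} δ C hδ hC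
    refine ⟨K + K, by positivity, ?_⟩
    intro X _ hG hX μ ν hμ hν x y z
    obtain ⟨q, hq⟩ := hcenter X hG hX x y z
    exact (dist_triangle_left _ _ q).trans (add_le_add (hq μ hμ) (hq ν hν))
  refine ⟨hclose, ?_⟩
  rintro X _ hG ⟨δ, hδ, hX⟩ C C' μ ν hC - hμ hν
  obtain ⟨D, -, hD⟩ := hclose δ (max C C') hδ (hC.trans (le_max_left _ _))
  exact ⟨D, hD X hG hX μ ν (hμ.mono (le_max_left _ _)) (hν.mono (le_max_right _ _))⟩
end
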